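/- Let L : ℝⁿ → [0,∞) be a convex C¹ function with L(0) = DL(0) = 0 such that there is a constant C < ∞ with sup_{r/2 < |x| < r} L(x) ≤ C·inf_{r/2 < |x| < r} L(x) for every r > 0. Then there exists a constant C' < ∞ such that |DL(x)| ≤ C'·L(x)/|x| for every x ≠ 0. -/

import Mathlib

open MeasureTheory Filter Metric Set
open scoped RealInnerProductSpace ENNReal Topology NNReal

noncomputable section

/-- Euclidean space `ℝⁿ`. -/
abbrev Eucl (n : ℕ) := EuclideanSpace ℝ (Fin n)

/-- Infimal convolution (Hopf–Lax formula): `u_t(x) = inf_a ( u(x + t a) + t L(a) )`. -/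
def infConv {n : ℕ} (u L : Eucl n → ℝ) (t : ℝ) (x : Eucl n) : ℝ :=
  ⨅ a : Eucl n, (u (x + t • a) + t * L a)

/-- `L` is superlinear: `L x / ‖x‖ → ∞` as `‖x‖ → ∞`. -/
def Superlinear {n : ℕ} (L : Eucl n → ℝ) : Prop :=
  Tendsto (fun x => L x / ‖x‖) (Bornology.cobounded (Eucl n)) atTop

/-- `g` is the weak (distributional) gradient of `u` on `ℝⁿ`. -/
def HasWeakGradient {n : ℕ} (u : Eucl n → ℝ) (g : Eucl n → Eucl n) : Prop :=
  ∀ φ : Eucl n → ℝ, ContDiff ℝ (⊤ : ℕ∞) φ → HasCompactSupport φ →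
    ∀ v : Eucl n, ∫ x, u x * fderiv ℝ φ x v = - ∫ x, φ x * ⟪g x, v⟫

/-- The set `R u_t(x)` of minimizers in the infimal convolution. -/
def minSet {n : ℕ} (u L : Eucl n → ℝ) (t : ℝ) (x : Eucl n) : Set (Eucl n) :=
  {a | infConv u L t x = u (x + t • a) + t * L a}

/-! A convex function lies above its tangent planes, so moving from `x` by `‖x‖ / 4` in the steepest
direction raises `L` by at least `‖DL(x)‖ * ‖x‖ / 4`. Such a move stays in the annulus around the
origin with radii `2‖x‖ / 3` and `4‖x‖ / 3`, where `L` is at most `C * L x`; hence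
`‖DL(x)‖ * ‖x‖ / 4 ≤ (C - 1) * L x`. -/

section Convex

variable {E : Type*} [NormedAddCommGroup E] [NormedSpace ℝ E] {f : E → ℝ} {f' : StrongDual ℝ E}
  {s : Set E} {x y : E}

theorem add_apply_sub_le_of_convexOn_of_hasFDerivWithinAt (hf : ConvexOn ℝ s f)
    (hf' : HasFDerivWithinAt f f' s x) (hx : x ∈ s) (hy : y ∈ s) :
    f x + f' (y - x) ≤ f y := by
  let γ : ℝ →ᵃ[ℝ] E := AffineMap.lineMap x y
  have hγ₀ : γ 0 = x := AffineMap.lineMap_apply_zero x y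
  have hγ₁ : γ 1 = y := AffineMap.lineMap_apply_one x y
  have hderiv : HasDerivWithinAt (f ∘ γ) (f' (y - x)) (γ ⁻¹' s) 0 :=
    HasFDerivWithinAt.comp_hasDerivWithinAt 0 (by rwa [hγ₀])
      AffineMap.hasDerivWithinAt_lineMap (mapsTo_preimage γ s)
  have hslope : f' (y - x) ≤ slope (f ∘ γ) 0 1 :=
    (hf.comp_affineMap γ).le_slope_of_hasDerivWithinAt
      (by rwa [mem_preimage, hγ₀]) (by rwa [mem_preimage, hγ₁]) one_pos hderiv
  have hslope_eq : slope (f ∘ γ) 0 1 = f y - f x := by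
    simp only [slope_def_field, Function.comp_apply, hγ₀, hγ₁, sub_zero, div_one]
  linarith

theorem opNorm_le_div_of_forall_apply_le {r c : ℝ} (hr : 0 < r)
    (h : ∀ z ∈ closedBall (0 : E) r, f' z ≤ c) : ‖f'‖ ≤ c / r := by
  refine ContinuousLinearMap.opNorm_bound_of_ball_bound hr c f' fun z hz => abs_le'.2 ⟨h z hz, ?_⟩
  simpa only [map_neg] using h (-z) (by simpa only [mem_closedBall_zero_iff, norm_neg] using hz)

theorem opNorm_le_of_convexOn_closedBall_of_hasFDerivWithinAt {r M : ℝ} (hr : 0 < r)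
    (hf : ConvexOn ℝ (closedBall x r) f) (hf' : HasFDerivWithinAt f f' (closedBall x r) x)
    (hM : ∀ y ∈ closedBall x r, f y ≤ M) : ‖f'‖ ≤ (M - f x) / r := by
  refine opNorm_le_div_of_forall_apply_le hr fun z hz => ?_
  have hxz : x + z ∈ closedBall x r := by
    simpa only [mem_closedBall_iff_norm, add_sub_cancel_left, sub_zero] using hz
  have htangent : f x + f' z ≤ f (x + z) := by
    simpa only [add_sub_cancel_left] using
      add_apply_sub_le_of_convexOn_of_hasFDerivWithinAt hf hf' (mem_closedBall_self hr.le) hxz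
  linarith [hM (x + z) hxz]

end Convex

theorem le_mul_of_mem_closedBall_of_annulus {E : Type*} [SeminormedAddCommGroup E]
    {f : E → ℝ} {C : ℝ}
    (hann : ∀ r : ℝ, 0 < r → ∀ x y : E,
      r / 2 < ‖x‖ → ‖x‖ < r → r / 2 < ‖y‖ → ‖y‖ < r → f x ≤ C * f y)
    {x y : E} (hx : 0 < ‖x‖) (hy : y ∈ closedBall x (‖x‖ / 4)) : f y ≤ C * f x := by
  have hdist : |‖y‖ - ‖x‖| ≤ ‖x‖ / 4 :=
    (abs_norm_sub_norm_le y x).trans (mem_closedBall_iff_norm.1 hy)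
  obtain ⟨hlower, hupper⟩ := abs_le.1 hdist
  exact hann (4 / 3 * ‖x‖) (by positivity) y x
    (by linarith) (by linarith) (by linarith) (by linarith)

theorem stmt17_general {E : Type*} [NormedAddCommGroup E] [NormedSpace ℝ E] {L : E → ℝ}
    (hL_conv : ConvexOn ℝ Set.univ L) {C : ℝ}
    (hann : ∀ r : ℝ, 0 < r → ∀ x y : E,
      r / 2 < ‖x‖ → ‖x‖ < r → r / 2 < ‖y‖ → ‖y‖ < r → L x ≤ C * L y)
    {x : E} (hx : x ≠ 0) (hL_diff : DifferentiableAt ℝ L x) :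
    ‖fderiv ℝ L x‖ ≤ 4 * (C - 1) * L x / ‖x‖ := by
  have hx_pos : 0 < ‖x‖ := norm_pos_iff.2 hx
  calc ‖fderiv ℝ L x‖ ≤ (C * L x - L x) / (‖x‖ / 4) :=
        opNorm_le_of_convexOn_closedBall_of_hasFDerivWithinAt (div_pos hx_pos four_pos)
          (hL_conv.subset (subset_univ _) (convex_closedBall x _))
          hL_diff.hasFDerivAt.hasFDerivWithinAt
          fun _ hy => le_mul_of_mem_closedBall_of_annulus hann hx_pos hy
    _ = 4 * (C - 1) * L x / ‖x‖ := by field_simp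

/-- If `L` is a convex `C¹` function with `L(0) = DL(0) = 0` satisfying
`sup_{r/2<|x|<r} L ≤ C inf_{r/2<|x|<r} L` for all `r > 0`, then there is `C' < ∞` with
`|DL(x)| ≤ C' L(x)/|x|` for every `x ≠ 0`. -/
theorem stmt17 {n : ℕ}
    (L : Eucl n → ℝ) (hL_nonneg : ∀ x, 0 ≤ L x) (hL_conv : ConvexOn ℝ Set.univ L)
    (hL_C1 : ContDiff ℝ 1 L) (hL0 : L 0 = 0) (hDL0 : gradient L 0 = 0)
    (C : ℝ) (hann : ∀ r : ℝ, 0 < r → ∀ x y : Eucl n,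
      r / 2 < ‖x‖ → ‖x‖ < r → r / 2 < ‖y‖ → ‖y‖ < r → L x ≤ C * L y) :
    ∃ C' : ℝ, ∀ x : Eucl n, x ≠ 0 → ‖gradient L x‖ ≤ C' * L x / ‖x‖ := by
  refine ⟨4 * (C - 1), fun x hx => ?_⟩
  rw [gradient, LinearIsometryEquiv.norm_map]
  exact stmt17_general hL_conv hann hx (hL_C1.differentiable one_ne_zero x)
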